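/- Fix a sign choice ± and let α > 0. Let f_1, ..., f_M be trigonometric polynomials, each of which is α-separated. Then ‖(Σ_{m=1}^M |H_± f_m|²)^{1/2}‖_{S²}² ≤ (2π/α + 1) ‖(Σ_{m=1}^M |f_m|²)^{1/2}‖_{S²}², i.e. sup_{x ∈ ℝ} ∫_x^{x+1} Σ_{m=1}^M |H_± f_m(s)|² ds ≤ (2π/α + 1) sup_{x ∈ ℝ} ∫_x^{x+1} Σ_{m=1}^M |f_m(s)|² ds. -/

import Mathlib

/-- A trigonometric polynomial `x ↦ Σ_{n<N} c_n e^{iλ_n x}` with strictly increasing real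
exponents. -/
structure TrigPoly where
  N : ℕ
  c : ℕ → ℂ
  Λ : ℕ → ℝ
  mono : ∀ n, n + 1 < N → Λ n < Λ (n + 1)

/-- Evaluation of a trigonometric polynomial. -/
noncomputable def TrigPoly.eval (P : TrigPoly) (x : ℝ) : ℂ :=
  ∑ n ∈ Finset.range P.N, P.c n * Complex.exp (Complex.I * (P.Λ n : ℂ) * (x : ℂ))

/-- `α`-separation of the exponents: `λ_{n+1} - λ_n > α`. -/
def TrigPoly.sep (P : TrigPoly) (α : ℝ) : Prop :=
  ∀ n, n + 1 < P.N → α < P.Λ (n + 1) - P.Λ n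

/-- `sgnPM true` is `sgn₊` (value `1` at `0`); `sgnPM false` is `sgn₋` (value `-1` at `0`). -/
noncomputable def sgnPM (pos : Bool) (x : ℝ) : ℝ :=
  if pos then (if 0 ≤ x then 1 else -1) else (if 0 < x then 1 else -1)

/-- The modified Hilbert transform `H_± f(x) = Σ_n (-i sgn_±(λ_n)) c_n e^{iλ_n x}`. -/
noncomputable def TrigPoly.hilb (pos : Bool) (P : TrigPoly) (x : ℝ) : ℂ :=
  ∑ n ∈ Finset.range P.N,
    (-Complex.I * (sgnPM pos (P.Λ n) : ℂ)) * P.c n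
      * Complex.exp (Complex.I * (P.Λ n : ℂ) * (x : ℂ))

open Finset

lemma herm_bound {N : ℕ} (A : Matrix (Fin N) (Fin N) ℂ) (hA : A.IsHermitian) (c : ℝ)
    (h : ∀ (μ : ℝ) (v : Fin N → ℂ), v ≠ 0 → A.mulVec v = (μ : ℂ) • v → μ ≤ c) (u : Fin N → ℂ) :
    (dotProduct (star u) (A.mulVec u)).re ≤ c * ∑ n, ‖u n‖ ^ 2 := by
  have hB : ((c : ℂ) • (1 : Matrix (Fin N) (Fin N) ℂ) - A).IsHermitian := by
    refine Matrix.IsHermitian.sub ?_ hA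
    ext i j
    by_cases hij : i = j <;> simp [hij, eq_comm]
  have hpos := hB.posSemidef_iff_eigenvalues_nonneg.2 (by
    intro i
    have he := hB.mulVec_eigenvectorBasis i
    set v : Fin N → ℂ := (hB.eigenvectorBasis i).ofLp with hv
    have hv0 : v ≠ 0 := by
      have := hB.eigenvectorBasis.orthonormal.ne_zero i
      intro h0; apply this; ext j; exact congrFun h0 j
    have := h (c - hB.eigenvalues i) v hv0 (by
      rw [Matrix.sub_mulVec, Matrix.smul_mulVec, Matrix.one_mulVec] at he
      have he' := he
      rw [sub_eq_iff_eq_add] at he'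
      ext j
      have := congrFun he' j
      simp at this ⊢
      linear_combination -this)
    simp; linarith)
  have h1 := hpos.re_dotProduct_nonneg u
  rw [Matrix.sub_mulVec, Matrix.smul_mulVec, Matrix.one_mulVec, dotProduct_sub, dotProduct_smul] at h1
  have h2 : dotProduct (star u) u = ((∑ n, ‖u n‖ ^ 2 : ℝ) : ℂ) := by
    simp [dotProduct, Complex.conj_mul']
  rw [h2] at h1
  simp only [smul_eq_mul, ← Complex.ofReal_mul, map_sub, RCLike.re_to_complex, Complex.ofReal_re] at h1
  linarith

noncomputable def KK {N : ℕ} (l : Fin N → ℝ) (m n : Fin N) : ℝ := (l m - l n)⁻¹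

lemma KK_anti {N : ℕ} (l : Fin N → ℝ) (m n : Fin N) : KK l m n = - KK l n m := by
  unfold KK; rw [← inv_neg]; ring_nf

lemma KK_self {N : ℕ} (l : Fin N → ℝ) (m : Fin N) : KK l m m = 0 := by simp [KK]

lemma KK_prod {N : ℕ} (l : Fin N → ℝ) (hl : Function.Injective l) (m k : Fin N) :
    ∑ n, KK l m n * KK l k n = KK l k m * (∑ n, KK l m n - ∑ n, KK l k n) + 2 * (KK l k m) ^ 2
      + if m = k then ∑ n, (KK l m n) ^ 2 else 0 := by
  by_cases hmk : m = k
  · subst hmk; simp [KK_self, sq]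
  · rw [if_neg hmk, add_zero, ← sum_sub_distrib, mul_sum]
    have : ∀ n, KK l m n * KK l k n = KK l k m * (KK l m n - KK l k n)
       + ((if n = m then (KK l k m)^2 else 0) + (if n = k then (KK l k m)^2 else 0)) := by
      intro n
      by_cases h1 : n = m
      · subst h1; simp [KK_self, hmk]; ring
      · by_cases h2 : n = k
        · subst h2; simp [KK_self, h1]; rw [KK_anti l m n]; ring
        · simp only [h1, h2, if_false, KK]
          have a1 : l m - l n ≠ 0 := sub_ne_zero.2 fun h => h1 (hl h).symm
          have a2 : l k - l n ≠ 0 := sub_ne_zero.2 fun h => h2 (hl h).symm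
          have a3 : l k - l m ≠ 0 := sub_ne_zero.2 fun h => hmk (hl h).symm
          field_simp; ring
    rw [sum_congr rfl fun n _ => this n, sum_add_distrib, sum_add_distrib]
    simp; ring

lemma eig_bound {N : ℕ} (l : Fin N → ℝ) (hl : Function.Injective l) (B : ℝ)
    (hB : ∀ m, ∑ n, (KK l m n) ^ 2 ≤ B) (μ : ℝ) (u : Fin N → ℂ) (hu : u ≠ 0)
    (he : ∀ n, ∑ m, (KK l m n : ℂ) * u m = Complex.I * μ * u n) : μ ^ 2 ≤ 3 * B := by
  let S : Fin N → ℝ := fun m => ∑ n, KK l m n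
  let T : Fin N → ℝ := fun m => ∑ n, (KK l m n) ^ 2
  have hpos : 0 < ∑ n, ‖u n‖ ^ 2 := by
    obtain ⟨i, hi⟩ := Function.ne_iff.1 hu
    exact sum_pos' (fun _ _ => by positivity) ⟨i, mem_univ _, by have : 0 < ‖u i‖ := norm_pos_iff.2 hi
                                                                 positivity⟩
  have hec : ∀ n, ∑ m, (KK l m n : ℂ) * star (u m) = -(Complex.I * μ * star (u n)) := by
    intro n
    have := congrArg star (he n)
    simpa [star_sum, mul_comm] using this
  -- expand
  have e1 : (μ : ℂ) ^ 2 * ∑ n, u n * star (u n)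
      = ∑ m, ∑ k, u m * star (u k) * ((∑ n, KK l m n * KK l k n : ℝ) : ℂ) := by
    have : ∀ n, (μ : ℂ) ^ 2 * (u n * star (u n)) =
        ∑ m, ∑ k, u m * star (u k) * (KK l m n * KK l k n) := by
      intro n
      have h1 : (μ : ℂ) ^ 2 * (u n * star (u n)) = (Complex.I * μ * u n) * (-(Complex.I * μ * star (u n))) := by
        linear_combination ((μ:ℂ)^2 * u n * star (u n)) * Complex.I_sq
      rw [h1, ← he, ← hec, sum_mul_sum]
      exact sum_congr rfl fun _ _ => sum_congr rfl fun _ _ => by ring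
    rw [mul_sum, sum_congr rfl fun n _ => this n, sum_comm]
    refine sum_congr rfl fun m _ => ?_
    rw [sum_comm]
    refine sum_congr rfl fun k _ => ?_
    push_cast
    rw [mul_sum]
  have e2 : ∑ m, ∑ k, u m * star (u k) * ((∑ n, KK l m n * KK l k n : ℝ) : ℂ)
     = ∑ m, ∑ k, u m * star (u k) * (KK l k m * (S m - S k)) +
       (∑ m, ∑ k, u m * star (u k) * (2 * (KK l k m) ^ 2) + ∑ m, u m * star (u m) * T m) := by
    rw [← sum_add_distrib, ← sum_add_distrib]
    refine sum_congr rfl fun m _ => ?_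
    have : u m * star (u m) * (T m : ℂ) = ∑ k, u m * star (u k) * ((if m = k then T m else 0 : ℝ) : ℂ) := by
      rw [sum_eq_single m]
      · simp
      · intro k _ hk
        simp [hk.symm]
      · simp
    rw [this, ← sum_add_distrib, ← sum_add_distrib]
    refine sum_congr rfl fun k _ => ?_
    rw [KK_prod l hl]
    simp only [S, T]
    push_cast
    ring
  have e3 : ∑ m, ∑ k, u m * star (u k) * (KK l k m * (S m - S k)) = (0 : ℂ) := by
    have h1 : ∑ m, ∑ k, u m * star (u k) * (KK l k m * (S m - S k)) =
      ∑ m, (u m * S m) * ∑ k, (KK l k m : ℂ) * star (u k)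
       + ∑ k, (star (u k) * S k) * ∑ m, (KK l m k : ℂ) * u m := by
      simp only [mul_sum]
      conv_rhs => rw [add_comm, sum_comm, add_comm]
      rw [← sum_add_distrib]
      refine sum_congr rfl fun m _ => ?_
      rw [← sum_add_distrib]
      refine sum_congr rfl fun k _ => ?_
      rw [KK_anti l m k]; push_cast; ring
    rw [h1, ← sum_add_distrib]
    refine sum_eq_zero fun m _ => ?_
    rw [he, hec]; ring
  rw [e2, e3, zero_add] at e1
  have e4 := congrArg Complex.re e1
  have hz : ∀ z : ℂ, z * star z = ((‖z‖ ^ 2 : ℝ) : ℂ) := fun z => by simp [Complex.mul_conj']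
  simp only [hz] at e4
  have l1 : ((μ : ℂ) ^ 2 * ∑ n, ((‖u n‖ ^ 2 : ℝ) : ℂ)).re = μ ^ 2 * ∑ n, ‖u n‖ ^ 2 := by
    rw [← Complex.ofReal_sum, ← Complex.ofReal_pow, ← Complex.ofReal_mul, Complex.ofReal_re]
  have l2 : (∑ m, ((‖u m‖ ^ 2 : ℝ) : ℂ) * T m).re = ∑ m, ‖u m‖ ^ 2 * T m := by
    simp only [← Complex.ofReal_mul, ← Complex.ofReal_sum, Complex.ofReal_re]
  have l3 : (∑ m, ∑ k, u m * star (u k) * (2 * (KK l k m : ℂ) ^ 2)).re ≤ 2 * ∑ m, ‖u m‖ ^ 2 * T m := by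
    have h1 : (∑ m, ∑ k, u m * star (u k) * (2 * (KK l k m : ℂ) ^ 2)).re
       ≤ ∑ m, ∑ k, (‖u m‖ ^ 2 * KK l m k ^ 2 + ‖u k‖ ^ 2 * KK l k m ^ 2) := by
      simp only [Complex.re_sum]
      refine sum_le_sum fun m _ => sum_le_sum fun k _ => ?_
      have : u m * star (u k) * (2 * (KK l k m : ℂ) ^ 2) = ((2 * KK l k m ^ 2 : ℝ) : ℂ) * (u m * star (u k)) := by
        push_cast; ring
      rw [this, Complex.re_ofReal_mul, KK_anti l m k, neg_sq]
      have h3 : (u m * star (u k)).re ≤ ‖u m‖ * ‖u k‖ := by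
        refine (Complex.re_le_norm _).trans ?_
        simp
      have h4 : 0 ≤ KK l k m ^ 2 := sq_nonneg _
      nlinarith [mul_le_mul_of_nonneg_left h3 h4, mul_nonneg h4 (sq_nonneg (‖u m‖ - ‖u k‖))]
    refine h1.trans (le_of_eq ?_)
    simp only [sum_add_distrib]
    rw [sum_comm (f := fun m k => ‖u k‖ ^ 2 * KK l k m ^ 2)]
    simp only [← mul_sum]
    simp only [T]; ring
  rw [Complex.add_re, l1, l2] at e4
  have l4 : ∑ m, ‖u m‖ ^ 2 * T m ≤ B * ∑ m, ‖u m‖ ^ 2 := by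
    rw [mul_sum]
    exact sum_le_sum fun m _ => by
      rw [mul_comm]; exact mul_le_mul_of_nonneg_right (hB m) (by positivity)
  have : μ ^ 2 * ∑ n, ‖u n‖ ^ 2 ≤ (3 * B) * ∑ n, ‖u n‖ ^ 2 := by linarith
  exact le_of_mul_le_mul_right this hpos

lemma KK_sq_bound {N : ℕ} (l : Fin N → ℝ) (α : ℝ) (hα : 0 < α)
    (hl : ∀ m n : Fin N, α * |(m : ℝ) - (n : ℝ)| ≤ |l m - l n|) (m : Fin N) :
    ∑ n, (KK l m n) ^ 2 ≤ Real.pi ^ 2 / (3 * α ^ 2) := by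
  have hz : HasSum (fun k : ℤ => 1 / (k : ℝ) ^ 2) (Real.pi ^ 2 / 3) := by
    have := HasSum.of_nat_of_neg (f := fun k : ℤ => 1 / (k : ℝ) ^ 2) (by simpa using hasSum_zeta_two)
      (by simpa using hasSum_zeta_two)
    have h0 : Real.pi ^ 2 / 6 + Real.pi ^ 2 / 6 - 1 / (((0 : ℤ) : ℝ)) ^ 2 = Real.pi ^ 2 / 3 := by
      norm_num; ring
    exact h0 ▸ this
  let e : Fin N ↪ ℤ := ⟨fun n => (m : ℤ) - (n : ℤ), fun a b h => by
    ext; simp at h; exact h⟩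
  have hev : ∀ n, ((e n : ℤ) : ℝ) = (m : ℝ) - (n : ℝ) := fun n => by
    change (((m : ℤ) - (n : ℤ) : ℤ) : ℝ) = _
    push_cast; rfl
  clear_value e
  have h1 := sum_le_hasSum (univ.map e) (fun k _ => by positivity) hz
  rw [sum_map] at h1
  have h2 : ∑ n, (KK l m n) ^ 2 ≤ ∑ n, (1 / α ^ 2) * (1 / ((e n : ℤ) : ℝ) ^ 2) := by
    refine sum_le_sum fun n _ => ?_
    by_cases hmn : m = n
    · subst hmn; simp [KK_self, hev]
    · have hp : 0 < |(m : ℝ) - (n : ℝ)| := by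
        rw [abs_pos, sub_ne_zero]
        intro h; exact hmn (Fin.ext (by exact_mod_cast h))
      have := hl m n
      have h3 : 0 < α * |(m : ℝ) - (n : ℝ)| := by positivity
      rw [hev, KK, inv_pow, ← sq_abs (l m - l n), ← sq_abs ((m : ℝ) - (n : ℝ)), one_div_mul_one_div, ← mul_pow, ← one_div]
      exact one_div_le_one_div_of_le (by positivity) (pow_le_pow_left₀ h3.le this 2)
  rw [← mul_sum] at h2
  refine h2.trans ((mul_le_mul_of_nonneg_left h1 (by positivity)).trans (le_of_eq ?_))
  field_simp

lemma hilbert_ineq {N : ℕ} (l : Fin N → ℝ) (α : ℝ) (hα : 0 < α)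
    (hl : ∀ m n : Fin N, α * |(m : ℝ) - (n : ℝ)| ≤ |l m - l n|) (u : Fin N → ℂ) :
    |(∑ n, ∑ m, star (u n) * (-Complex.I * KK l m n * u m)).re| ≤ Real.pi / α * ∑ n, ‖u n‖ ^ 2 := by
  have hinj : Function.Injective l := by
    intro m n h
    have := hl m n
    rw [h, sub_self, abs_zero] at this
    have h2 : |(m : ℝ) - (n : ℝ)| = 0 :=
      le_antisymm (nonpos_of_mul_nonpos_right this hα) (abs_nonneg _)
    rw [abs_eq_zero, sub_eq_zero] at h2
    exact Fin.ext (by exact_mod_cast h2)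
  have key : ∀ (μ : ℝ) (v : Fin N → ℂ), v ≠ 0 →
      (∀ n, ∑ m, (-Complex.I * KK l m n * v m) = μ * v n) → |μ| ≤ Real.pi / α := by
    intro μ v hv h
    have := eig_bound l hinj _ (KK_sq_bound l α hα hl) μ v hv (fun n => by
      rw [mul_assoc, ← h n, mul_sum]
      refine sum_congr rfl fun m _ => ?_
      linear_combination (KK l m n * v m : ℂ) * Complex.I_sq)
    have hp := Real.pi_pos
    apply abs_le_of_sq_le_sq _ (by positivity)
    refine this.trans (le_of_eq ?_)
    field_simp
  let A : Matrix (Fin N) (Fin N) ℂ := Matrix.of fun n m => -Complex.I * KK l m n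
  have hA : A.IsHermitian := by
    ext i j
    simp only [A, Matrix.conjTranspose_apply, Matrix.of_apply]
    rw [KK_anti l j i]; simp
  have hmv : ∀ v n, A.mulVec v n = ∑ m, (-Complex.I * KK l m n * v m) := fun v n => by
    simp [Matrix.mulVec, dotProduct, A]
  have hq : (dotProduct (star u) (A.mulVec u)) = ∑ n, ∑ m, star (u n) * (-Complex.I * KK l m n * u m) := by
    simp only [dotProduct, hmv, mul_sum, Pi.star_apply]
  have h1 := herm_bound A hA (Real.pi / α) (fun μ v hv h => (le_abs_self μ).trans
    (key μ v hv (fun n => by rw [← hmv, h]; simp))) u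
  have h2 := herm_bound (-A) hA.neg (Real.pi / α) (fun μ v hv h => (le_abs_self μ).trans
    (by
      rw [← abs_neg]
      refine key (-μ) v hv (fun n => ?_)
      rw [← hmv]
      have := congrFun h n
      simp [Matrix.neg_mulVec] at this
      push_cast
      linear_combination -this)) u
  rw [Matrix.neg_mulVec, dotProduct_neg, Complex.neg_re, hq] at h2
  rw [hq] at h1
  exact abs_le.2 ⟨by linarith, h1⟩

lemma int_formula {N : ℕ} (l : Fin N → ℝ) (hl : Function.Injective l) (c : Fin N → ℂ) (a b : ℝ)
    (u : Fin N → ℝ → ℂ) (hu : ∀ n t, u n t = c n * Complex.exp (Complex.I * l n * t)) :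
    ∫ t in a..b, ‖∑ n, u n t‖ ^ 2 = (b - a) * ∑ n, ‖c n‖ ^ 2
      + ((∑ n, ∑ m, star (u n b) * (-Complex.I * KK l m n * u m b)).re
       - (∑ n, ∑ m, star (u n a) * (-Complex.I * KK l m n * u m a)).re) := by
  have hd : ∀ n (t : ℝ), HasDerivAt (u n) (Complex.I * l n * u n t) t := by
    intro n t
    have h0 : u n = fun t : ℝ => c n * Complex.exp (Complex.I * l n * t) := funext (hu n)
    rw [h0]
    have h1 : HasDerivAt (fun t : ℝ => Complex.I * l n * (t : ℂ)) (Complex.I * l n * 1) t :=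
      (Complex.ofRealCLM.hasDerivAt (x := t)).const_mul _
    refine ((h1.cexp).const_mul (c n)).congr_deriv ?_
    ring
  have hn : ∀ n t, ‖u n t‖ = ‖c n‖ := by
    intro n t
    rw [hu, norm_mul, Complex.norm_exp]
    simp
  have hc : ∀ n, Continuous (u n) := fun n =>
    continuous_iff_continuousAt.2 fun t => (hd n t).continuousAt
  have hF : ∀ t : ℝ, HasDerivAt (fun t : ℝ => t * ∑ n, ‖c n‖ ^ 2 +
      (∑ n, ∑ m, star (u n t) * (-Complex.I * KK l m n * u m t)).re) (‖∑ n, u n t‖ ^ 2) t := by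
    intro t
    have h1 : HasDerivAt (fun t : ℝ => ∑ n, ∑ m, star (u n t) * (-Complex.I * KK l m n * u m t))
      (∑ n, ∑ m, (star (Complex.I * l n * u n t) * (-Complex.I * KK l m n * u m t)
         + star (u n t) * (-Complex.I * KK l m n * (Complex.I * l m * u m t)))) t := by
      refine HasDerivAt.fun_sum fun n _ => HasDerivAt.fun_sum fun m _ => ?_
      exact (hd n t).star.mul ((hd m t).const_mul _)
    have h2 : HasDerivAt (fun t : ℝ => (∑ n, ∑ m, star (u n t) * (-Complex.I * KK l m n * u m t)).re)
        _ t := (Complex.reCLM.hasFDerivAt.comp_hasDerivAt t h1)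
    have h3 := ((hasDerivAt_id t).mul_const (∑ n, ‖c n‖ ^ 2)).add h2
    refine h3.congr_deriv ?_
    have h4 : ∑ n, ∑ m, (star (Complex.I * l n * u n t) * (-Complex.I * KK l m n * u m t)
         + star (u n t) * (-Complex.I * KK l m n * (Complex.I * l m * u m t)))
         = ((‖∑ n, u n t‖ ^ 2 - ∑ n, ‖c n‖ ^ 2 : ℝ) : ℂ) := by
      have h5 : ((‖∑ n, u n t‖ ^ 2 : ℝ) : ℂ) = ∑ n, ∑ m, star (u n t) * u m t := by
        push_cast
        rw [← Complex.conj_mul', map_sum, sum_mul_sum]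
        rfl
      have h6 : ((∑ n, ‖c n‖ ^ 2 : ℝ) : ℂ) = ∑ n, ∑ m, if n = m then star (u n t) * u m t else 0 := by
        push_cast
        refine sum_congr rfl fun n _ => ?_
        rw [sum_ite_eq, if_pos (mem_univ _), ← hn n t, ← Complex.conj_mul']
        rfl
      rw [Complex.ofReal_sub, h5, h6, ← sum_sub_distrib]
      refine sum_congr rfl fun n _ => ?_
      rw [← sum_sub_distrib]
      refine sum_congr rfl fun m _ => ?_
      by_cases hnm : n = m
      · subst hnm; simp [KK_self]
      · have h7 : (KK l m n : ℂ) * (l m - l n) = 1 := by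
          have : l m - l n ≠ 0 := sub_ne_zero.2 fun h => hnm (hl h).symm
          rw [← Complex.ofReal_sub, ← Complex.ofReal_mul, KK, inv_mul_cancel₀ this, Complex.ofReal_one]
        have h8 : star (Complex.I * l n * u n t) = -Complex.I * l n * star (u n t) := by
          simp
        rw [h8, if_neg hnm]
        linear_combination (star (u n t) * u m t) * h7
          + (-(KK l m n : ℂ) * (l m - l n) * star (u n t) * u m t) * Complex.I_sq
    rw [h4, Complex.reCLM_apply, Complex.ofReal_re]
    ring
  rw [intervalIntegral.integral_eq_sub_of_hasDerivAt (fun t _ => hF t)]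
  · ring
  · apply Continuous.intervalIntegrable
    fun_prop

lemma sep_abs (P : TrigPoly) (α : ℝ) (h : P.sep α) (m n : Fin P.N) :
    α * |(m : ℝ) - (n : ℝ)| ≤ |P.Λ m - P.Λ n| := by
  have key : ∀ a k : ℕ, a + k < P.N → α * k ≤ P.Λ (a + k) - P.Λ a := by
    intro a k
    induction k with
    | zero => simp
    | succ k ih =>
      intro hk
      have h1 := ih (by omega)
      have h2 := h (a + k) (by omega)
      rw [← add_assoc]; push_cast; linarith
  have key2 : ∀ a b : ℕ, a ≤ b → b < P.N → α * |(b : ℝ) - a| ≤ |P.Λ b - P.Λ a| := by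
    intro a b hab hb
    obtain ⟨k, rfl⟩ := Nat.exists_eq_add_of_le hab
    have := key a k hb
    push_cast
    rw [add_sub_cancel_left, abs_of_nonneg (Nat.cast_nonneg k)]
    exact this.trans (le_abs_self _)
  rcases le_total (n : ℕ) m with h1 | h1
  · exact key2 _ _ h1 m.2
  · rw [abs_sub_comm, abs_sub_comm (P.Λ m)]
    exact key2 _ _ h1 n.2

lemma int_bound (P : TrigPoly) (α : ℝ) (hα : 0 < α) (h : P.sep α) (d : ℕ → ℂ) (a b : ℝ) :
    |(∫ t in a..b, ‖∑ n ∈ range P.N, d n * Complex.exp (Complex.I * (P.Λ n : ℂ) * (t : ℂ))‖ ^ 2)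
      - (b - a) * ∑ n ∈ range P.N, ‖d n‖ ^ 2| ≤ 2 * Real.pi / α * ∑ n ∈ range P.N, ‖d n‖ ^ 2 := by
  let l : Fin P.N → ℝ := fun n => P.Λ n
  have hs : ∀ m n : Fin P.N, α * |(m : ℝ) - (n : ℝ)| ≤ |l m - l n| := sep_abs P α h
  have hinj : Function.Injective l := by
    intro m n h
    have := hs m n
    rw [h, sub_self, abs_zero] at this
    have h2 : |(m : ℝ) - (n : ℝ)| = 0 :=
      le_antisymm (nonpos_of_mul_nonpos_right this hα) (abs_nonneg _)
    rw [abs_eq_zero, sub_eq_zero] at h2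
    exact Fin.ext (by exact_mod_cast h2)
  let u : Fin P.N → ℝ → ℂ := fun n t => d n * Complex.exp (Complex.I * (P.Λ n : ℂ) * (t : ℂ))
  have hn : ∀ n t, ‖u n t‖ = ‖d n‖ := by
    intro n t
    simp only [u]
    rw [norm_mul, Complex.norm_exp]
    simp
  have e := int_formula l hinj (fun n => d n) a b u (fun n t => rfl)
  have hb := hilbert_ineq l α hα hs (fun n => u n b)
  have ha := hilbert_ineq l α hα hs (fun n => u n a)
  simp only [hn] at ha hb
  simp only [Finset.sum_range]
  change |(∫ t in a..b, ‖∑ n, u n t‖ ^ 2) - _| ≤ _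
  rw [e, add_sub_cancel_left]
  refine (abs_sub _ _).trans ((add_le_add hb ha).trans (le_of_eq ?_))
  ring

lemma eval_cont (P : TrigPoly) : Continuous P.eval := by
  unfold TrigPoly.eval; fun_prop

lemma hilb_eq (pos : Bool) (P : TrigPoly) (x : ℝ) : P.hilb pos x =
    ∑ n ∈ range P.N, (-Complex.I * (sgnPM pos (P.Λ n) : ℂ) * P.c n)
      * Complex.exp (Complex.I * (P.Λ n : ℂ) * (x : ℂ)) := rfl

lemma hilb_cont (pos : Bool) (P : TrigPoly) : Continuous (P.hilb pos) := by
  unfold TrigPoly.hilb; fun_prop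

lemma sgn_norm (pos : Bool) (x : ℝ) (z : ℂ) : ‖-Complex.I * (sgnPM pos x : ℂ) * z‖ = ‖z‖ := by
  have : |sgnPM pos x| = 1 := by
    unfold sgnPM; split_ifs <;> simp
  simp [this]

/-- Vector-valued `S²` bound for the modified Hilbert transforms on `α`-separated
trigonometric polynomials:
`sup_x ∫_x^{x+1} Σ_m |H_± f_m|² ≤ (2π/α + 1) sup_x ∫_x^{x+1} Σ_m |f_m|²`. -/
theorem stmt_8 (pos : Bool) (α : ℝ) (hα : 0 < α) (M : ℕ) (P : Fin M → TrigPoly)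
    (hsep : ∀ m : Fin M, (P m).sep α) :
    (⨆ x : ℝ, ∫ s in x..(x + 1), ∑ m : Fin M, ‖TrigPoly.hilb pos (P m) s‖ ^ 2)
      ≤ (2 * Real.pi / α + 1)
        * ⨆ x : ℝ, ∫ s in x..(x + 1), ∑ m : Fin M, ‖(P m).eval s‖ ^ 2 := by
  have hpi := Real.pi_pos
  set C : ℝ := ∑ m, ∑ n ∈ range (P m).N, ‖(P m).c n‖ ^ 2 with hC
  have hC0 : 0 ≤ C := sum_nonneg fun _ _ => sum_nonneg fun _ _ => by positivity
  have hE : ∀ a b : ℝ, |(∫ s in a..b, ∑ m : Fin M, ‖(P m).eval s‖ ^ 2) - (b - a) * C|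
      ≤ 2 * Real.pi / α * C := by
    intro a b
    rw [intervalIntegral.integral_finsetSum (fun m _ =>
      (show Continuous fun s => ‖(P m).eval s‖ ^ 2 from (eval_cont (P m)).norm.pow 2).intervalIntegrable a b), hC, mul_sum, mul_sum, ← sum_sub_distrib]
    exact (abs_sum_le_sum_abs _ _).trans
      (sum_le_sum fun m _ => int_bound (P m) α hα (hsep m) (P m).c a b)
  have hH : ∀ a b : ℝ, |(∫ s in a..b, ∑ m : Fin M, ‖(P m).hilb pos s‖ ^ 2) - (b - a) * C|
      ≤ 2 * Real.pi / α * C := by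
    intro a b
    rw [intervalIntegral.integral_finsetSum (fun m _ =>
      (show Continuous fun s => ‖TrigPoly.hilb pos (P m) s‖ ^ 2 from (hilb_cont pos (P m)).norm.pow 2).intervalIntegrable a b), hC, mul_sum, mul_sum, ← sum_sub_distrib]
    refine (abs_sum_le_sum_abs _ _).trans (sum_le_sum fun m _ => ?_)
    have := int_bound (P m) α hα (hsep m) (fun n => -Complex.I * (sgnPM pos ((P m).Λ n) : ℂ) * (P m).c n) a b
    simp only [sgn_norm] at this
    exact this
  have hcont : Continuous fun s => ∑ m : Fin M, ‖(P m).eval s‖ ^ 2 :=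
    continuous_finsetSum _ fun m _ => (eval_cont (P m)).norm.pow 2
  have hbdd : BddAbove (Set.range fun x : ℝ => ∫ s in x..(x + 1), ∑ m : Fin M, ‖(P m).eval s‖ ^ 2) := by
    refine ⟨2 * Real.pi / α * C + C, ?_⟩
    rintro _ ⟨x, rfl⟩
    have := (abs_le.1 (hE x (x + 1))).2
    simp only at this ⊢
    linarith
  set S := ⨆ x : ℝ, ∫ s in x..(x + 1), ∑ m : Fin M, ‖(P m).eval s‖ ^ 2 with hS
  have hle : ∀ x : ℝ, ∫ s in x..(x + 1), ∑ m : Fin M, ‖(P m).eval s‖ ^ 2 ≤ S := fun x =>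
    le_ciSup hbdd x
  have hK : ∀ K : ℕ, ∫ s in (0 : ℝ)..K, ∑ m : Fin M, ‖(P m).eval s‖ ^ 2 ≤ K * S := by
    intro K
    induction K with
    | zero => simp
    | succ K ih =>
      push_cast
      rw [← intervalIntegral.integral_add_adjacent_intervals (b := (K : ℝ))
        (hcont.intervalIntegrable _ _) (hcont.intervalIntegrable _ _)]
      linarith [hle K]
  have hCS : C ≤ S := by
    by_contra! hlt
    obtain ⟨K, hKK⟩ := exists_nat_gt (2 * Real.pi / α * C / (C - S))
    rw [div_lt_iff₀ (by linarith)] at hKK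
    have := (abs_le.1 (hE 0 K)).1
    linarith [hK K]
  refine ciSup_le fun x => ?_
  have h1 := (abs_le.1 (hH x (x + 1))).2
  have h2 : (2 * Real.pi / α + 1) * C ≤ (2 * Real.pi / α + 1) * S :=
    mul_le_mul_of_nonneg_left hCS (by positivity)
  linarith
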